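/- Let p ≥ 1 be an integer, ρ > 0, and z = (z₁, z₂) ∈ ℝ². If there exists u ∈ Σ_p with a(u) c(u) > 0 and (c(u) z₁)² + (a(u) z₂ − b(u) z₁)² < ρ² a(u)² c(u)²/2, then z₁² + z₂² ≤ ρ². -/

import Mathlib

/-!
Write `X = u₀ + ∑ u_s A_s` and `Y = ∑ u_s B_s`, so that `a² = 1 + X`, `ab = Y`,
`b² + c² = 1 - X` and `a²c² = 1 - X² - Y²`. The left side of the hypothesis is then the quadratic
form `(1 - X) z₁² - 2 Y z₁ z₂ + (1 + X) z₂²`, whose eigenvalues are `1 ± r` with `r² = X² + Y² < 1`.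
Bounding it below by `(1 - r) ‖z‖²` and dividing by `1 - r` gives
`‖z‖² < ρ² (1 + r) / 2 ≤ ρ²`.
-/

open scoped BigOperators
open Finset

/-- The standard simplex `Σ_p` realized in `ℝ^{p-1}`. -/
def stdSimplex' (d : ℕ) : Set (Fin d → ℝ) := {u | (∀ s, 0 ≤ u s) ∧ ∑ s, u s ≤ 1}

/-- `a(u) = √(1 + u₀ + ∑_{s=1}^{p-1} u_s A_s)` with `A_s = cos(2sπ/p)`. -/
noncomputable def aF (p : ℕ) (u : Fin (p - 1) → ℝ) : ℝ :=
  Real.sqrt (1 + (1 - ∑ s, u s) +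
    ∑ s : Fin (p - 1), u s * Real.cos (2 * (s.1 + 1) * Real.pi / p))

/-- `b(u) = (1/a(u)) ∑_{s=1}^{p-1} u_s B_s` with `B_s = -sin(2sπ/p)`. -/
noncomputable def bF (p : ℕ) (u : Fin (p - 1) → ℝ) : ℝ :=
  (1 / aF p u) * ∑ s : Fin (p - 1), u s * (-Real.sin (2 * (s.1 + 1) * Real.pi / p))

/-- `c(u) = (1/a(u)) √(1 - (u₀ + ∑ u_s A_s)² - (∑ u_s B_s)²)`. -/
noncomputable def cF (p : ℕ) (u : Fin (p - 1) → ℝ) : ℝ :=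
  (1 / aF p u) *
    Real.sqrt (1 -
      ((1 - ∑ s, u s) +
          ∑ s : Fin (p - 1), u s * Real.cos (2 * (s.1 + 1) * Real.pi / p)) ^ 2 -
      (∑ s : Fin (p - 1), u s * (-Real.sin (2 * (s.1 + 1) * Real.pi / p))) ^ 2)

/-- The lower eigenvalue bound for the quadratic form, and its consequence for `‖z‖`. -/
lemma norm_le_of_quadForm_lt (X Y ρ x y : ℝ) (hD : 0 < 1 - X ^ 2 - Y ^ 2)
    (h : (1 - X) * x ^ 2 - 2 * Y * x * y + (1 + X) * y ^ 2 <
      ρ ^ 2 * (1 - X ^ 2 - Y ^ 2) / 2) :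
    x ^ 2 + y ^ 2 ≤ ρ ^ 2 := by
  obtain ⟨r, hr0, hr⟩ : ∃ r : ℝ, 0 ≤ r ∧ r ^ 2 = X ^ 2 + Y ^ 2 :=
    ⟨Real.sqrt (X ^ 2 + Y ^ 2), Real.sqrt_nonneg _, Real.sq_sqrt (by positivity)⟩
  have hr1 : r < 1 := by nlinarith
  -- Cauchy–Schwarz, using `(x² - y²)² + (2xy)² = (x² + y²)²`
  have hcs : X * (x ^ 2 - y ^ 2) + Y * (2 * x * y) ≤ r * (x ^ 2 + y ^ 2) := by
    apply le_of_sq_le_sq _ (by positivity)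
    have e : (r * (x ^ 2 + y ^ 2)) ^ 2 = (X ^ 2 + Y ^ 2) * (x ^ 2 + y ^ 2) ^ 2 := by
      rw [mul_pow, hr]
    rw [e]
    nlinarith [sq_nonneg (X * (2 * x * y) - Y * (x ^ 2 - y ^ 2))]
  have hD' : 1 - X ^ 2 - Y ^ 2 = (1 - r) * (1 + r) := by linarith
  rw [hD'] at h
  have h2 : (1 - r) * (x ^ 2 + y ^ 2) ≤ (1 - r) * (ρ ^ 2 * (1 + r) / 2) := by linarith
  have h3 := le_of_mul_le_mul_left h2 (by linarith)
  nlinarith [sq_nonneg ρ]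

theorem E_nonempty_imp_norm_le (p : ℕ) (hp : 1 ≤ p) (ρ : ℝ) (hρ : 0 < ρ) (z : ℝ × ℝ)
    (h : ∃ u ∈ stdSimplex' (p - 1), 0 < aF p u * cF p u ∧
      (cF p u * z.1) ^ 2 + (aF p u * z.2 - bF p u * z.1) ^ 2 <
        ρ ^ 2 * aF p u ^ 2 * cF p u ^ 2 / 2) :
    z.1 ^ 2 + z.2 ^ 2 ≤ ρ ^ 2 := by
  obtain ⟨u, -, hac, hlt⟩ := h
  have ha : 0 < aF p u := by
    refine lt_of_le_of_ne (Real.sqrt_nonneg _) fun h0 => ?_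
    rw [← h0, zero_mul] at hac
    exact hac.false
  set X := (1 - ∑ s, u s) +
    ∑ s : Fin (p - 1), u s * Real.cos (2 * (s.1 + 1) * Real.pi / p) with hX
  set Y := ∑ s : Fin (p - 1), u s * (-Real.sin (2 * (s.1 + 1) * Real.pi / p)) with hY
  have haX : aF p u = Real.sqrt (1 + X) := by rw [aF, hX, add_assoc]
  have hab : aF p u * bF p u = Y := by
    rw [bF, ← hY]; field_simp
  have hacD : aF p u * cF p u = Real.sqrt (1 - X ^ 2 - Y ^ 2) := by
    rw [cF, ← hX, ← hY]; field_simp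
  have hD : 0 < 1 - X ^ 2 - Y ^ 2 := Real.sqrt_pos.1 (hacD ▸ hac)
  have ha2 : aF p u ^ 2 = 1 + X := by
    rw [haX] at ha ⊢
    exact Real.sq_sqrt (Real.sqrt_pos.1 ha).le
  have hac2 : aF p u ^ 2 * cF p u ^ 2 = 1 - X ^ 2 - Y ^ 2 := by
    rw [← mul_pow, hacD, Real.sq_sqrt hD.le]
  have hbc : bF p u ^ 2 + cF p u ^ 2 = 1 - X := by
    have hb2 : aF p u ^ 2 * bF p u ^ 2 = Y ^ 2 := by rw [← mul_pow, hab]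
    apply mul_left_cancel₀ (pow_pos ha 2).ne'
    rw [mul_add, hb2, hac2, ha2]
    ring
  apply norm_le_of_quadForm_lt X Y ρ z.1 z.2 hD
  calc (1 - X) * z.1 ^ 2 - 2 * Y * z.1 * z.2 + (1 + X) * z.2 ^ 2
      = (cF p u * z.1) ^ 2 + (aF p u * z.2 - bF p u * z.1) ^ 2 := by
        rw [← hbc, ← hab, ← ha2]; ring
    _ < ρ ^ 2 * aF p u ^ 2 * cF p u ^ 2 / 2 := hlt
    _ = ρ ^ 2 * (1 - X ^ 2 - Y ^ 2) / 2 := by rw [← hac2]; ring
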